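/- At s = 2, ∑'_{(k,m)} ( −1/(9m² + 2k²)² + 1/(k² + 18m²)² ) = (π²/(2√6))·L(χ_{-3}, 2). -/

import Mathlib

/-!
The forms `k² + 18m²` and `2k² + 9m²` are the two classes of discriminant `-72`, one in each genus,
and the left-hand side is the Dirichlet series of the corresponding genus character at `s = 2`.
Concretely, both are restrictions of `N(x, y) = x² + 2y²` to the sublattices `3 ∣ y` and `3 ∣ x`,
and `χ₋₃(x² + 2y²) = 1_{3 ∣ y} - 1_{3 ∣ x}`. Hence (`lattice_sum_eq`, `lattice_sum_fiber`) the
left-hand side equals `∑ r(n) χ₋₃(n) / n²`, with `r(n)` the number of representations of `n` by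
`x² + 2y²`.

Dirichlet's formula `r(n) = 2 ∑_{d ∣ n} χ₋₈(d)` (`ncard_repTwo`) holds because, for each prime `p`,
both sides satisfy the recursion `f(pm) = (1 + χ₋₈(p)) f(m) - χ₋₈(p) f(m / p)`. For `r` this reflects
the behaviour of `p` in `ℤ[√-2]`: ramified, inert or split.

The sum therefore factors as `2 L(χ₋₃χ₋₈, 2) L(χ₋₃, 2)` (`dirichlet_product`). The product `χ₋₃χ₋₈`
is the even character `χ₂₄`, and its finite Fourier expansion combined with the Fourier series of
the Bernoulli polynomial `B₂` gives `L(χ₂₄, 2) = π² / (4√6)` (`hasSum_chi24`).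
-/

open scoped Real

/-- The odd Dirichlet character modulo 3. -/
noncomputable def chiNeg3 (n : ℕ) : ℝ :=
  if n % 3 = 1 then 1 else if n % 3 = 2 then -1 else 0

/-! ### Representations by `x² + 2y²` -/

/-- The set of representations of `n` by the form `x² + 2y²`, i.e. the elements of norm `n` in
`ℤ[√-2]`. -/
def repTwo (n : ℕ) : Set (ℤ × ℤ) := {z | z.1 ^ 2 + 2 * z.2 ^ 2 = (n : ℤ)}

lemma mem_repTwo {n : ℕ} {x y : ℤ} : (x, y) ∈ repTwo n ↔ x ^ 2 + 2 * y ^ 2 = (n : ℤ) := Iff.rfl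

lemma repTwo_finite (n : ℕ) : (repTwo n).Finite := by
  apply ((Set.finite_Icc (-(n : ℤ)) n).prod (Set.finite_Icc (-(n : ℤ)) n)).subset
  rintro ⟨x, y⟩ h
  rw [mem_repTwo] at h
  simp only [Set.mem_prod, Set.mem_Icc]
  refine ⟨⟨?_, ?_⟩, ?_, ?_⟩ <;> nlinarith [sq_nonneg x, sq_nonneg y, Int.le_self_sq x,
    Int.le_self_sq (-x), Int.le_self_sq y, Int.le_self_sq (-y)]

/-- The number of representations of `n / p` by `x² + 2y²`, read as `0` when `p ∤ n`. -/
noncomputable def repShift (p n : ℕ) : ℤ := if p ∣ n then ((repTwo (n / p)).ncard : ℤ) else 0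

/-- If `z² = -2` modulo the prime `p`, then `p` is a norm from `ℤ[√-2]`. Thue's pigeonhole argument
gives a nonzero `(x, y)` with `x ≡ z y` modulo `p` and `x², y² < p`, so `x² + 2y²` is `p` or `2p`;
in the second case `x = 2w` and `p = y² + 2w²`. -/
lemma exists_repr_of_isSquare {p : ℕ} (hp : p.Prime) (h : IsSquare (-2 : ZMod p)) :
    ∃ a b : ℤ, a ^ 2 + 2 * b ^ 2 = p := by
  have : Fact p.Prime := ⟨hp⟩
  obtain ⟨z, hz⟩ := h
  set k := Nat.sqrt p with hk
  have hk1 : k * k < p := by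
    refine lt_of_le_of_ne (Nat.sqrt_le p) fun h => ?_
    exact (Nat.prime_mul_iff.not.mpr (by rintro (⟨h1, h2⟩ | ⟨h1, h2⟩) <;> exact h1.ne_one h2))
      (h ▸ hp)
  have hk2 : p < (k + 1) * (k + 1) := Nat.lt_succ_sqrt p
  let f : Fin (k + 1) × Fin (k + 1) → ZMod p := fun u => (u.1 : ℕ) - z * (u.2 : ℕ)
  obtain ⟨u, v, huv, hf⟩ := Fintype.exists_ne_map_eq_of_card_lt f (by
    simpa [ZMod.card] using hk2)
  obtain ⟨⟨i, hi⟩, ⟨j, hj⟩⟩ := u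
  obtain ⟨⟨i', hi'⟩, ⟨j', hj'⟩⟩ := v
  simp only [f] at hf
  have hdvd : (p : ℤ) ∣ ((i : ℤ) - i') ^ 2 + 2 * ((j : ℤ) - j') ^ 2 := by
    rw [← ZMod.intCast_zmod_eq_zero_iff_dvd]
    push_cast
    have e : (i : ZMod p) - i' = z * (j - j') := by linear_combination hf
    rw [e]
    linear_combination (-((j : ZMod p) - j') ^ 2) * hz
  set x : ℤ := (i : ℤ) - i'
  set y : ℤ := (j : ℤ) - j'
  have hk1' : (k : ℤ) * k < p := by exact_mod_cast hk1
  have hx : x ^ 2 < p := by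
    have : x ^ 2 ≤ (k : ℤ) ^ 2 := sq_le_sq' (by omega) (by omega)
    linarith [sq (k : ℤ)]
  have hy : y ^ 2 < p := by
    have : y ^ 2 ≤ (k : ℤ) ^ 2 := sq_le_sq' (by omega) (by omega)
    linarith [sq (k : ℤ)]
  have hpos : 0 < x ^ 2 + 2 * y ^ 2 := by
    by_contra hc
    have hx0 : x = 0 := by nlinarith [sq_nonneg x, sq_nonneg y]
    have hy0 : y = 0 := by nlinarith [sq_nonneg x, sq_nonneg y]
    apply huv
    simp only [Prod.mk.injEq, Fin.mk.injEq]
    omega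
  obtain ⟨c, hc⟩ := hdvd
  have hp0 : (0 : ℤ) < p := by exact_mod_cast hp.pos
  have hc0 : 0 < c := by nlinarith
  have hc3 : c < 3 := by nlinarith
  interval_cases c
  · exact ⟨x, y, by linarith⟩
  · have : Even (x ^ 2) := ⟨p - y ^ 2, by linarith⟩
    obtain ⟨w, hw⟩ := (Int.even_pow.mp this).1
    refine ⟨y, w, ?_⟩
    rw [hw] at hc
    linarith

/-- Multiplication by `√-2` identifies the elements of norm `m` with those of norm `2m`. -/
lemma ncard_two (m : ℕ) : (repTwo (2 * m)).ncard = (repTwo m).ncard := by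
  have : repTwo (2 * m) = (fun z : ℤ × ℤ => (2 * z.2, z.1)) '' repTwo m := by
    ext ⟨x, y⟩
    rw [mem_repTwo, Set.mem_image]
    push_cast
    constructor
    · intro h
      obtain ⟨w, hw⟩ := (Int.even_pow.mp (⟨m - y ^ 2, by linarith⟩ : Even (x ^ 2))).1
      subst hw
      refine ⟨(y, w), mem_repTwo.mpr (by linarith), ?_⟩
      rw [two_mul]
    · rintro ⟨⟨a, b⟩, h, he⟩
      rw [mem_repTwo] at h
      simp only [Prod.mk.injEq] at he
      rw [← he.1, ← he.2]
      linarith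
  rw [this, Set.ncard_image_of_injective]
  rintro ⟨a, b⟩ ⟨c, d⟩ h
  simp only [Prod.mk.injEq] at h ⊢
  omega

lemma ncard_scale {p : ℕ} (hp : 0 < p) (m : ℕ) :
    ((fun z : ℤ × ℤ => ((p : ℤ) * z.1, (p : ℤ) * z.2)) '' repTwo m).ncard = (repTwo m).ncard := by
  apply Set.ncard_image_of_injective
  rintro ⟨a, b⟩ ⟨c, d⟩ h
  have : (p : ℤ) ≠ 0 := by positivity
  simp only [Prod.mk.injEq] at h ⊢
  exact ⟨mul_left_cancel₀ this h.1, mul_left_cancel₀ this h.2⟩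

/-- The elements of norm `p * m` divisible by `p` correspond to the elements of norm `m / p`. -/
lemma ncard_divisible {p : ℕ} (hp : 0 < p) (m : ℕ) :
    (({z ∈ repTwo (p * m) | (p : ℤ) ∣ z.1 ∧ (p : ℤ) ∣ z.2}.ncard : ℕ) : ℤ) = repShift p m := by
  have hp' : (p : ℤ) ≠ 0 := by positivity
  unfold repShift
  split_ifs with h
  · obtain ⟨n, rfl⟩ := h
    rw [Nat.mul_div_cancel_left _ hp, ← ncard_scale hp n]
    congr 2
    ext ⟨x, y⟩
    simp only [Set.mem_image, Prod.exists, mem_repTwo, Prod.mk.injEq, Set.mem_ofPred_eq]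
    push_cast
    constructor
    · rintro ⟨h, ⟨a, rfl⟩, b, rfl⟩
      refine ⟨a, b, ?_, rfl, rfl⟩
      apply mul_left_cancel₀ (mul_ne_zero hp' hp')
      linarith
    · rintro ⟨a, b, h, rfl, rfl⟩
      refine ⟨?_, ⟨a, rfl⟩, b, rfl⟩
      linear_combination (p : ℤ) ^ 2 * h
  · norm_cast
    rw [Set.ncard_eq_zero ((repTwo_finite _).subset (Set.sep_subset _ _))]
    rw [Set.eq_empty_iff_forall_notMem]
    rintro ⟨x, y⟩ ⟨h1, ⟨a, ha⟩, b, hb⟩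
    rw [mem_repTwo] at h1
    simp only at ha hb
    subst ha hb
    apply h
    zify
    refine ⟨a ^ 2 + 2 * b ^ 2, ?_⟩
    apply mul_left_cancel₀ hp'
    push_cast at h1
    linarith

/-- If `-2` is not a square modulo `p`, then every element of norm divisible by `p` is divisible by
`p`. -/
lemma ncard_inert {p : ℕ} (hp : p.Prime) (h : ¬ IsSquare (-2 : ZMod p)) (m : ℕ) :
    ((repTwo (p * m)).ncard : ℤ) = repShift p m := by
  have : Fact p.Prime := ⟨hp⟩
  rw [← ncard_divisible hp.pos]
  congr 2
  ext ⟨x, y⟩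
  simp only [Set.mem_ofPred_eq, mem_repTwo]
  refine ⟨fun hxy => ⟨hxy, ?_⟩, fun hxy => hxy.1⟩
  have e : (x : ZMod p) ^ 2 + 2 * (y : ZMod p) ^ 2 = 0 := by
    have := congrArg (Int.cast : ℤ → ZMod p) hxy
    push_cast at this
    simpa using this
  rw [← ZMod.intCast_zmod_eq_zero_iff_dvd, ← ZMod.intCast_zmod_eq_zero_iff_dvd]
  have hy : (y : ZMod p) = 0 := by
    by_contra hy
    refine h ⟨x / y, ?_⟩
    field_simp
    linear_combination -e
  refine ⟨?_, hy⟩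
  simpa [hy] using e

/-- Multiplication by `a + b√-2` is injective. -/
lemma ncard_mul {p : ℕ} (hp : 0 < p) {a b : ℤ} (hab : a ^ 2 + 2 * b ^ 2 = p) (m : ℕ) :
    ((fun z : ℤ × ℤ => (a * z.1 - 2 * b * z.2, b * z.1 + a * z.2)) '' repTwo m).ncard
      = (repTwo m).ncard := by
  apply Set.ncard_image_of_injective
  rintro ⟨x, y⟩ ⟨u, v⟩ h
  simp only [Prod.mk.injEq] at h ⊢
  have hp' : (p : ℤ) ≠ 0 := by positivity
  constructor <;> apply mul_left_cancel₀ hp' <;> rw [← hab]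
  · linear_combination a * h.1 + 2 * b * h.2
  · linear_combination a * h.2 - b * h.1

/-- An element `x + y√-2` of norm `p * m` is a multiple of `a + b√-2`, of norm `p`, if and only if
`(x + y√-2)(a - b√-2)` is divisible by `p`. -/
lemma mem_image_mul {p : ℕ} (hp : 0 < p) {a b : ℤ} (hab : a ^ 2 + 2 * b ^ 2 = p) (m : ℕ)
    (x y : ℤ) :
    (x, y) ∈ (fun z : ℤ × ℤ => (a * z.1 - 2 * b * z.2, b * z.1 + a * z.2)) '' repTwo m ↔
      (x, y) ∈ repTwo (p * m) ∧ (p : ℤ) ∣ a * x + 2 * b * y ∧ (p : ℤ) ∣ a * y - b * x := by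
  have hp' : (p : ℤ) ≠ 0 := by positivity
  simp only [Set.mem_image, Prod.exists, mem_repTwo, Prod.mk.injEq]
  push_cast
  constructor
  · rintro ⟨u, v, h, rfl, rfl⟩
    refine ⟨?_, ⟨u, ?_⟩, v, ?_⟩ <;> rw [← hab]
    · rw [← h]; ring
    · ring
    · ring
  · rintro ⟨h, ⟨u, hu⟩, v, hv⟩
    refine ⟨u, v, ?_, ?_, ?_⟩
    · apply mul_left_cancel₀ (mul_ne_zero hp' hp')
      have : (p * u) ^ 2 + 2 * (p * v) ^ 2 = p * (x ^ 2 + 2 * y ^ 2) := by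
        rw [← hu, ← hv, ← hab]; ring
      rw [h] at this
      linear_combination this
    · apply mul_left_cancel₀ hp'
      linear_combination (-a) * hu + 2 * b * hv + x * hab
    · apply mul_left_cancel₀ hp'
      linear_combination (-b) * hu - a * hv + y * hab

/-- For `p = ππ̄` with `π = a + b√-2`, an element of norm `p * m` is a multiple of `π` or of `π̄`, and
it is a multiple of both exactly when it is divisible by `p`; the count is inclusion–exclusion. -/
lemma ncard_split {p : ℕ} (hp : p.Prime) (h2 : p ≠ 2) (h : IsSquare (-2 : ZMod p)) (m : ℕ) :
    ((repTwo (p * m)).ncard : ℤ) = 2 * (repTwo m).ncard - repShift p m := by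
  obtain ⟨a, b, hab⟩ := exists_repr_of_isSquare hp h
  have hab' : a ^ 2 + 2 * (-b) ^ 2 = p := by rw [neg_sq]; exact hab
  have hpp : Prime (p : ℤ) := Nat.prime_iff_prime_int.mp hp
  have hp2 : ¬ (p : ℤ) ∣ 2 := fun hd =>
    h2 ((Nat.prime_dvd_prime_iff_eq hp Nat.prime_two).mp (by exact_mod_cast hd))
  have hb : ¬ (p : ℤ) ∣ b := by
    rintro ⟨c, rfl⟩
    have ha : (p : ℤ) ∣ a := hpp.dvd_of_dvd_pow (n := 2) ⟨1 - 2 * p * c ^ 2, by linarith⟩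
    obtain ⟨d, rfl⟩ := ha
    apply hpp.not_isUnit
    apply IsUnit.of_mul_eq_one (d ^ 2 + 2 * c ^ 2)
    apply mul_left_cancel₀ hpp.ne_zero
    linear_combination hab
  have ha : ¬ (p : ℤ) ∣ a := by
    rintro ⟨c, rfl⟩
    have : (p : ℤ) ∣ 2 * b ^ 2 := ⟨1 - p * c ^ 2, by linarith⟩
    rcases hpp.dvd_or_dvd this with h | h
    · exact hp2 h
    · exact hb (hpp.dvd_of_dvd_pow h)
  set A := (fun z : ℤ × ℤ => (a * z.1 - 2 * b * z.2, b * z.1 + a * z.2)) '' repTwo m with hA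
  set B := (fun z : ℤ × ℤ => (a * z.1 - 2 * (-b) * z.2, (-b) * z.1 + a * z.2)) '' repTwo m with hB
  have hunion : A ∪ B = repTwo (p * m) := by
    ext ⟨x, y⟩
    rw [Set.mem_union, hA, hB, mem_image_mul hp.pos hab, mem_image_mul hp.pos hab']
    refine ⟨by tauto, fun hxy => ?_⟩
    have hnorm := mem_repTwo.mp hxy
    push_cast at hnorm
    have hprod : (p : ℤ) ∣ (a * y - b * x) * (a * y - (-b) * x) :=
      ⟨y ^ 2 - b ^ 2 * m, by linear_combination y ^ 2 * hab - b ^ 2 * hnorm⟩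
    -- Divisibility of one coordinate of the product with the conjugate forces that of the other.
    rcases hpp.dvd_or_dvd hprod with hd | hd
    · refine Or.inl ⟨hxy, ?_, hd⟩
      refine (hpp.dvd_or_dvd (a := a) ?_).resolve_left ha
      have : a * (a * x + 2 * b * y) = p * x + 2 * b * (a * y - b * x) := by rw [← hab]; ring
      rw [this]
      exact dvd_add (dvd_mul_right _ _) (hd.mul_left _)
    · refine Or.inr ⟨hxy, ?_, hd⟩
      refine (hpp.dvd_or_dvd (a := a) ?_).resolve_left ha
      have : a * (a * x + 2 * (-b) * y) = p * x + 2 * (-b) * (a * y - (-b) * x) := by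
        rw [← hab]; ring
      rw [this]
      exact dvd_add (dvd_mul_right _ _) (hd.mul_left _)
  have hinter : A ∩ B = {z ∈ repTwo (p * m) | (p : ℤ) ∣ z.1 ∧ (p : ℤ) ∣ z.2} := by
    ext ⟨x, y⟩
    rw [Set.mem_inter_iff, hA, hB, mem_image_mul hp.pos hab, mem_image_mul hp.pos hab']
    simp only [Set.mem_ofPred_eq]
    constructor
    · rintro ⟨⟨hxy, h1, h2⟩, -, h3, h4⟩
      refine ⟨hxy, ?_, ?_⟩
      · have : (p : ℤ) ∣ 2 * (a * x) := by
          have := dvd_add h1 h3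
          ring_nf at this ⊢
          exact this
        exact (hpp.dvd_or_dvd ((hpp.dvd_or_dvd this).resolve_left hp2)).resolve_left ha
      · have : (p : ℤ) ∣ 2 * (a * y) := by
          have := dvd_add h2 h4
          ring_nf at this ⊢
          exact this
        exact (hpp.dvd_or_dvd ((hpp.dvd_or_dvd this).resolve_left hp2)).resolve_left ha
    · rintro ⟨hxy, h1, h2⟩
      exact ⟨⟨hxy, dvd_add (h1.mul_left _) (h2.mul_left _), dvd_sub (h2.mul_left _) (h1.mul_left _)⟩,
        hxy, dvd_add (h1.mul_left _) (h2.mul_left _), dvd_sub (h2.mul_left _) (h1.mul_left _)⟩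
  have key := Set.ncard_union_add_ncard_inter A B ((repTwo_finite m).image _)
    ((repTwo_finite m).image _)
  rw [hunion, hinter, hA, hB, ncard_mul hp.pos hab, ncard_mul hp.pos hab'] at key
  rw [← ncard_divisible hp.pos]
  have := congrArg (Nat.cast : ℕ → ℤ) key
  push_cast at this
  linarith

/-- The Hecke recursion for the representation numbers of `x² + 2y²`. -/
lemma ncard_hecke {p : ℕ} (hp : p.Prime) (m : ℕ) :
    ((repTwo (p * m)).ncard : ℤ) =
      (1 + ZMod.χ₈' p) * (repTwo m).ncard - ZMod.χ₈' p * repShift p m := by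
  have : Fact p.Prime := ⟨hp⟩
  rcases eq_or_ne p 2 with rfl | h2
  · have : ZMod.χ₈' ((2 : ℕ) : ZMod 8) = 0 := by decide
    rw [ncard_two, this]; ring
  have hodd : p % 2 = 1 := (Nat.Prime.mod_two_eq_one_iff_ne_two hp).mpr h2
  by_cases h : IsSquare (-2 : ZMod p)
  · have h8 := (ZMod.exists_sq_eq_neg_two_iff h2).mp h
    have : ZMod.χ₈' (p : ZMod 8) = 1 := by
      rw [ZMod.χ₈'_nat_eq_if_mod_eight]; simp [h8, hodd]
    rw [ncard_split hp h2 h, this]; ring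
  · have h8 := (ZMod.exists_sq_eq_neg_two_iff h2).not.mp h
    have : ZMod.χ₈' (p : ZMod 8) = -1 := by
      rw [ZMod.χ₈'_nat_eq_if_mod_eight]; simp [h8, hodd]
    rw [ncard_inert hp h, this]; ring

/-- The divisor sums of `χ₋₈` satisfy the same Hecke recursion as the representation numbers: the
divisors of `p * m` are those of `m` together with their multiples by `p`. -/
lemma sum_divisors_hecke {p : ℕ} (hp : p.Prime) {m : ℕ} (hm : m ≠ 0) :
    ∑ d ∈ (p * m).divisors, ZMod.χ₈' (d : ZMod 8) =
      (1 + ZMod.χ₈' p) * ∑ d ∈ m.divisors, ZMod.χ₈' (d : ZMod 8) -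
        ZMod.χ₈' p * if p ∣ m then ∑ d ∈ (m / p).divisors, ZMod.χ₈' (d : ZMod 8) else 0 := by
  have hinj : Function.Injective (fun d : ℕ => p * d) := mul_right_injective₀ hp.ne_zero
  have hsum : ∀ s : Finset ℕ, ∑ d ∈ s.image (fun d => p * d), ZMod.χ₈' (d : ZMod 8) =
      ZMod.χ₈' p * ∑ d ∈ s, ZMod.χ₈' (d : ZMod 8) := by
    intro s
    rw [Finset.sum_image fun _ _ _ _ h => hinj h, Finset.mul_sum]
    refine Finset.sum_congr rfl fun d _ => ?_
    rw [Nat.cast_mul, map_mul]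
  have hunion : (p * m).divisors = m.divisors ∪ m.divisors.image (fun d => p * d) := by
    ext d
    simp only [Finset.mem_union, Finset.mem_image, Nat.mem_divisors]
    constructor
    · rintro ⟨hd, -⟩
      by_cases hpd : p ∣ d
      · obtain ⟨e, rfl⟩ := hpd
        exact Or.inr ⟨e, ⟨Nat.dvd_of_mul_dvd_mul_left hp.pos hd, hm⟩, rfl⟩
      · exact Or.inl ⟨(Nat.Coprime.dvd_of_dvd_mul_left
          ((Nat.Prime.coprime_iff_not_dvd hp).mpr hpd).symm hd), hm⟩
    · rintro (⟨h, -⟩ | ⟨e, ⟨h, -⟩, rfl⟩)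
      · exact ⟨h.mul_left _, mul_ne_zero hp.ne_zero hm⟩
      · exact ⟨Nat.mul_dvd_mul_left _ h, mul_ne_zero hp.ne_zero hm⟩
  have key := Finset.sum_union_inter (s₁ := m.divisors) (s₂ := m.divisors.image (fun d => p * d))
    (f := fun d : ℕ => ZMod.χ₈' (d : ZMod 8))
  rw [← hunion, hsum] at key
  have hinter : ∑ d ∈ m.divisors ∩ m.divisors.image (fun d => p * d), ZMod.χ₈' (d : ZMod 8) =
      ZMod.χ₈' p * if p ∣ m then ∑ d ∈ (m / p).divisors, ZMod.χ₈' (d : ZMod 8) else 0 := by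
    split_ifs with h
    · rw [← hsum]
      congr 1
      obtain ⟨n, rfl⟩ := h
      rw [Nat.mul_div_cancel_left _ hp.pos]
      have hn : n ≠ 0 := right_ne_zero_of_mul hm
      ext d
      simp only [Finset.mem_inter, Finset.mem_image, Nat.mem_divisors]
      constructor
      · rintro ⟨⟨h1, -⟩, e, -, rfl⟩
        exact ⟨e, ⟨Nat.dvd_of_mul_dvd_mul_left hp.pos h1, hn⟩, rfl⟩
      · rintro ⟨e, ⟨h1, -⟩, rfl⟩
        exact ⟨⟨Nat.mul_dvd_mul_left _ h1, hm⟩, e, ⟨h1.mul_left _, hm⟩, rfl⟩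
    · rw [mul_zero]
      apply Finset.sum_eq_zero
      intro d hd
      simp only [Finset.mem_inter, Finset.mem_image, Nat.mem_divisors] at hd
      obtain ⟨⟨h1, -⟩, e, -, rfl⟩ := hd
      exact absurd ((dvd_mul_right p e).trans h1) h
  rw [hinter] at key
  linarith

lemma ncard_one : (repTwo 1).ncard = 2 := by
  have : repTwo 1 = {(1, 0), (-1, 0)} := by
    ext ⟨x, y⟩
    simp only [mem_repTwo, Set.mem_insert_iff, Set.mem_singleton_iff, Prod.mk.injEq]
    constructor
    · intro h
      push_cast at h
      have hy : y = 0 := by nlinarith [sq_nonneg x, sq_nonneg y]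
      subst hy
      have : x ^ 2 = 1 := by linarith
      rcases sq_eq_one_iff.mp this with h | h <;> simp [h]
    · rintro (⟨rfl, rfl⟩ | ⟨rfl, rfl⟩) <;> norm_num
  rw [this, Set.ncard_pair]
  simp

/-- Dirichlet's formula `r(n) = 2 ∑_{d ∣ n} χ₋₈(d)` for the number of representations of `n ≥ 1` by
`x² + 2y²`, where `ZMod.χ₈'` is the character `χ₋₈` modulo 8. -/
theorem ncard_repTwo {n : ℕ} (hn : n ≠ 0) :
    ((repTwo n).ncard : ℤ) = 2 * ∑ d ∈ n.divisors, ZMod.χ₈' (d : ZMod 8) := by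
  induction n using Nat.strong_induction_on with
  | _ n ih =>
  rcases eq_or_ne n 1 with rfl | h1
  · rw [ncard_one]; simp
  obtain ⟨p, hp, m, rfl⟩ := Nat.exists_prime_and_dvd h1
  have hm : m ≠ 0 := right_ne_zero_of_mul hn
  have hlt : m < p * m := lt_mul_of_one_lt_left (Nat.pos_of_ne_zero hm) hp.one_lt
  rw [ncard_hecke hp, sum_divisors_hecke hp hm, ih m hlt hm, repShift]
  split_ifs with h
  · have h0 : m / p ≠ 0 := (Nat.div_pos (Nat.le_of_dvd (Nat.pos_of_ne_zero hm) h) hp.pos).ne'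
    rw [ih (m / p) (lt_of_le_of_lt (Nat.div_le_self _ _) hlt) h0]
    ring
  · ring

/-! ### The value `L(χ₂₄, 2)` -/

/-- The even real primitive character modulo 24, as the product `χ₋₃ χ₋₈`. -/
noncomputable def chi24 (n : ℕ) : ℝ := chiNeg3 n * (ZMod.χ₈' (n : ZMod 8) : ℤ)

lemma chi24_add_twelve (n : ℕ) : chi24 (n + 12) = -chi24 n := by
  have h : ∀ a : ZMod 8, ZMod.χ₈' (a + 12) = -ZMod.χ₈' a := by decide
  have h3 : (n + 12) % 3 = n % 3 := by omega
  have := h n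
  unfold chi24 chiNeg3
  push_cast
  rw [this, h3]
  push_cast
  ring

/-- Both sides change sign under `n ↦ n + 12`, which leaves the values `n < 12` to be compared. -/
lemma cos_sin_eq_chi24 (n : ℕ) :
    4 * Real.cos (π * n / 6) * Real.sin (π * n / 2) * Real.sin (π * n / 4) = √6 * chi24 n := by
  have h6 : √6 = √2 * √3 := by rw [← Real.sqrt_mul (by norm_num)]; norm_num
  induction n using Nat.strong_induction_on with
  | _ n ih =>
  rcases lt_or_ge n 12 with h | h
  · have c1 : Real.cos (π * 1 / 6) = √3 / 2 := by rw [mul_one, Real.cos_pi_div_six]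
    have c5 : Real.cos (π * 5 / 6) = -(√3 / 2) := by
      rw [← Real.cos_pi_div_six, ← Real.cos_pi_sub]; congr 1; ring
    have c7 : Real.cos (π * 7 / 6) = -(√3 / 2) := by
      rw [← Real.cos_pi_div_six, ← Real.cos_add_pi]; congr 1; ring
    have c11 : Real.cos (π * 11 / 6) = √3 / 2 := by
      rw [← Real.cos_pi_div_six, ← Real.cos_two_pi_sub]; congr 1; ring
    have c3 : Real.cos (π * 3 / 6) = 0 := by
      rw [← Real.cos_pi_div_two]; congr 1; ring
    have c9 : Real.cos (π * 9 / 6) = 0 := by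
      rw [← neg_zero, ← Real.cos_pi_div_two, ← Real.cos_add_pi]; congr 1; ring
    have s1 : Real.sin (π * 1 / 2) = 1 := by rw [mul_one, Real.sin_pi_div_two]
    have sstep : ∀ x : ℝ, Real.sin (π * (x + 2) / 2) = -Real.sin (π * x / 2) := by
      intro x; rw [← Real.sin_add_pi]; congr 1; ring
    have s3 : Real.sin (π * 3 / 2) = -1 := by
      rw [← s1, ← sstep]; norm_num
    have s5 : Real.sin (π * 5 / 2) = 1 := by
      rw [← neg_neg (1 : ℝ), ← s3, ← sstep]; norm_num
    have s7 : Real.sin (π * 7 / 2) = -1 := by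
      rw [← s5, ← sstep]; norm_num
    have s9 : Real.sin (π * 9 / 2) = 1 := by
      rw [← neg_neg (1 : ℝ), ← s7, ← sstep]; norm_num
    have s11 : Real.sin (π * 11 / 2) = -1 := by
      rw [← s9, ← sstep]; norm_num
    have tstep : ∀ x : ℝ, Real.sin (π * (x + 4) / 4) = -Real.sin (π * x / 4) := by
      intro x; rw [← Real.sin_add_pi]; congr 1; ring
    have t1 : Real.sin (π * 1 / 4) = √2 / 2 := by rw [mul_one, Real.sin_pi_div_four]
    have t3 : Real.sin (π * 3 / 4) = √2 / 2 := by
      rw [← Real.sin_pi_div_four, ← Real.sin_pi_sub]; congr 1; ring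
    have t5 : Real.sin (π * 5 / 4) = -(√2 / 2) := by
      rw [← t1, ← tstep]; norm_num
    have t7 : Real.sin (π * 7 / 4) = -(√2 / 2) := by
      rw [← t3, ← tstep]; norm_num
    have t11 : Real.sin (π * 11 / 4) = √2 / 2 := by
      rw [← neg_neg (√2 / 2), ← t7, ← tstep]; norm_num
    have heven : ∀ k : ℕ, Real.sin (π * (2 * k : ℕ) / 2) = 0 := by
      intro k; rw [← Real.sin_nat_mul_pi k]; congr 1; push_cast; ring
    have hc : ∀ k : ℕ, chi24 (2 * k) = 0 := by
      intro k
      have : ∀ a : ZMod 8, ZMod.χ₈' (2 * a) = 0 := by decide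
      have := this k
      unfold chi24; push_cast; rw [this]; simp
    rcases Nat.even_or_odd' n with ⟨k, rfl | rfl⟩
    · rw [heven, hc]; ring
    · have hk : k < 6 := by omega
      have w1 : chi24 1 = 1 := by
        rw [chi24, show ZMod.χ₈' ((1 : ℕ) : ZMod 8) = 1 by decide]; norm_num [chiNeg3]
      have w5 : chi24 5 = 1 := by
        rw [chi24, show ZMod.χ₈' ((5 : ℕ) : ZMod 8) = -1 by decide]; norm_num [chiNeg3]
      have w7 : chi24 7 = -1 := by
        rw [chi24, show ZMod.χ₈' ((7 : ℕ) : ZMod 8) = -1 by decide]; norm_num [chiNeg3]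
      have w11 : chi24 11 = -1 := by
        rw [chi24, show ZMod.χ₈' ((11 : ℕ) : ZMod 8) = 1 by decide]; norm_num [chiNeg3]
      have w3 : chi24 3 = 0 := by norm_num [chi24, chiNeg3]
      have w9 : chi24 9 = 0 := by norm_num [chi24, chiNeg3]
      interval_cases k
      · rw [show 2 * 0 + 1 = 1 by rfl, show ((1 : ℕ) : ℝ) = 1 by norm_num,
          c1, s1, t1, w1, h6]; ring
      · rw [show 2 * 1 + 1 = 3 by rfl, show ((3 : ℕ) : ℝ) = 3 by norm_num,
          c3, s3, t3, w3, h6]; ring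
      · rw [show 2 * 2 + 1 = 5 by rfl, show ((5 : ℕ) : ℝ) = 5 by norm_num,
          c5, s5, t5, w5, h6]; ring
      · rw [show 2 * 3 + 1 = 7 by rfl, show ((7 : ℕ) : ℝ) = 7 by norm_num,
          c7, s7, t7, w7, h6]; ring
      · rw [show 2 * 4 + 1 = 9 by rfl, show ((9 : ℕ) : ℝ) = 9 by norm_num,
          c9, s9, w9]; ring
      · rw [show 2 * 5 + 1 = 11 by rfl, show ((11 : ℕ) : ℝ) = 11 by norm_num,
          c11, s11, t11, w11, h6]; ring
  · obtain ⟨m, rfl⟩ := Nat.exists_eq_add_of_le' h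
    rw [chi24_add_twelve, mul_neg, ← ih m (by omega)]
    have e1 : Real.cos (π * (m + 12 : ℕ) / 6) = Real.cos (π * m / 6) := by
      rw [← Real.cos_add_two_pi (π * m / 6)]; congr 1; push_cast; ring
    have e2 : Real.sin (π * (m + 12 : ℕ) / 2) = Real.sin (π * m / 2) := by
      rw [← Real.sin_add_nat_mul_two_pi (π * m / 2) 3]; congr 1; push_cast; ring
    have e3 : Real.sin (π * (m + 12 : ℕ) / 4) = -Real.sin (π * m / 4) := by
      rw [← Real.sin_add_pi (π * m / 4), ← Real.sin_add_two_pi (π * m / 4 + π)]; congr 1; push_cast; ring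
    rw [e1, e2, e3]; ring

/-- The finite Fourier expansion of `χ₂₄`, i.e. its Gauss sum evaluated. -/
lemma chi24_eq_cos (n : ℕ) :
    √6 * chi24 n = Real.cos (2 * π * n * (1 / 24)) + Real.cos (2 * π * n * (5 / 24))
      - Real.cos (2 * π * n * (7 / 24)) - Real.cos (2 * π * n * (11 / 24)) := by
  rw [← cos_sin_eq_chi24]
  have a1 := Real.cos_add_cos (2 * π * n * (1 / 24)) (2 * π * n * (5 / 24))
  have a2 := Real.cos_add_cos (2 * π * n * (7 / 24)) (2 * π * n * (11 / 24))
  have a3 := Real.cos_sub_cos (π * n / 4) (π * n * (3 / 4))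
  have b1 : (2 * π * n * (1 / 24) + 2 * π * n * (5 / 24)) / 2 = π * n / 4 := by ring
  have b2 : (2 * π * n * (1 / 24) - 2 * π * n * (5 / 24)) / 2 = -(π * n / 6) := by ring
  have b3 : (2 * π * n * (7 / 24) + 2 * π * n * (11 / 24)) / 2 = π * n * (3 / 4) := by ring
  have b4 : (2 * π * n * (7 / 24) - 2 * π * n * (11 / 24)) / 2 = -(π * n / 6) := by ring
  have b5 : (π * n / 4 + π * n * (3 / 4)) / 2 = π * n / 2 := by ring
  have b6 : (π * n / 4 - π * n * (3 / 4)) / 2 = -(π * n / 4) := by ring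
  rw [b1, b2, Real.cos_neg] at a1
  rw [b3, b4, Real.cos_neg] at a2
  rw [b5, b6, Real.sin_neg] at a3
  linear_combination (-1 : ℝ) * a1 + a2 - 2 * Real.cos (π * n / 6) * a3

/-- `L(χ₂₄, 2) = π² / (4√6)`, from the Fourier series of the Bernoulli polynomial `B₂`. -/
lemma hasSum_chi24 : HasSum (fun n : ℕ => chi24 n / (n : ℝ) ^ 2) (π ^ 2 / (4 * √6)) := by
  have H : ∀ x ∈ Set.Icc (0 : ℝ) 1, HasSum (fun n : ℕ => 1 / (n : ℝ) ^ 2 * Real.cos (2 * π * n * x))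
      (π ^ 2 * (x ^ 2 - x + 1 / 6)) := by
    intro x hx
    have := hasSum_one_div_nat_pow_mul_cos (k := 1) one_ne_zero hx
    convert this using 1
    simp [Polynomial.bernoulli, Finset.sum_range_succ]
    ring
  have h1 := H (1 / 24) (by norm_num)
  have h5 := H (5 / 24) (by norm_num)
  have h7 := H (7 / 24) (by norm_num)
  have h11 := H (11 / 24) (by norm_num)
  have h6 : √6 ≠ 0 := by positivity
  have hfun : (fun n : ℕ => chi24 n / (n : ℝ) ^ 2) = fun n : ℕ => 1 / √6 *
      (1 / (n : ℝ) ^ 2 * Real.cos (2 * π * n * (1 / 24))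
        + 1 / (n : ℝ) ^ 2 * Real.cos (2 * π * n * (5 / 24))
        - 1 / (n : ℝ) ^ 2 * Real.cos (2 * π * n * (7 / 24))
        - 1 / (n : ℝ) ^ 2 * Real.cos (2 * π * n * (11 / 24))) := by
    funext n
    have e : chi24 n = 1 / √6 * (√6 * chi24 n) := by field_simp
    rw [e, chi24_eq_cos n]; ring
  have hval : π ^ 2 / (4 * √6) = 1 / √6 *
      (π ^ 2 * ((1 / 24) ^ 2 - 1 / 24 + 1 / 6) + π ^ 2 * ((5 / 24) ^ 2 - 5 / 24 + 1 / 6)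
        - π ^ 2 * ((7 / 24) ^ 2 - 7 / 24 + 1 / 6)
        - π ^ 2 * ((11 / 24) ^ 2 - 11 / 24 + 1 / 6)) := by
    field_simp; norm_num
  rw [hfun, hval]
  exact (((h1.add h5).sub h7).sub h11).mul_left (1 / √6)

/-! ### The lattice sum and its factorization -/

/-- The norm form `x² + 2y²` of `ℤ[√-2]`, as a natural number. -/
def normTwo (z : ℤ × ℤ) : ℕ := (z.1 ^ 2 + 2 * z.2 ^ 2).toNat

lemma normTwo_cast (z : ℤ × ℤ) : (normTwo z : ℤ) = z.1 ^ 2 + 2 * z.2 ^ 2 :=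
  Int.toNat_of_nonneg (by positivity)

lemma normTwo_cast_real (z : ℤ × ℤ) : (normTwo z : ℝ) = (z.1 : ℝ) ^ 2 + 2 * (z.2 : ℝ) ^ 2 := by
  exact_mod_cast congrArg (Int.cast : ℤ → ℝ) (normTwo_cast z)

lemma normTwo_fiber (n : ℕ) : normTwo ⁻¹' {n} = repTwo n := by
  ext z
  simp only [Set.mem_preimage, Set.mem_singleton_iff, repTwo, Set.mem_ofPred_eq, ← normTwo_cast]
  exact Nat.cast_inj.symm

/-- Away from the origin `2(x² + 2y²)` bounds both `1 + x²` and `1 + y²`, so the terms are dominated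
by `4 / ((1 + x²)(1 + y²))`. -/
lemma summable_normTwo : Summable fun z : ℤ × ℤ => 1 / (normTwo z : ℝ) ^ 2 := by
  have h1 : Summable fun k : ℤ => 1 / (1 + (k : ℝ) ^ 2) := by
    have hs : Summable fun k : ℤ => 1 / (k : ℝ) ^ 2 := Real.summable_one_div_int_pow.mpr one_lt_two
    refine Summable.of_norm_bounded_eventually hs ?_
    filter_upwards [(Set.finite_singleton (0 : ℤ)).compl_mem_cofinite] with k hk
    have : (k : ℝ) ≠ 0 := by simpa using hk
    rw [Real.norm_of_nonneg (by positivity)]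
    exact one_div_le_one_div_of_le (by positivity) (by linarith)
  have h2 := (h1.mul_of_nonneg h1 (fun k => by positivity) (fun k => by positivity)).mul_left 4
  refine Summable.of_nonneg_of_le (fun z => by positivity) (fun z => ?_) h2
  rcases Nat.eq_zero_or_pos (normTwo z) with h | h
  · rw [h]; norm_num; positivity
  · have h' : (1 : ℝ) ≤ normTwo z := by exact_mod_cast h
    have e := normTwo_cast_real z
    set N : ℝ := (normTwo z : ℝ) with hN
    have b1 : 1 + (z.1 : ℝ) ^ 2 ≤ 2 * N := by nlinarith [sq_nonneg (z.2 : ℝ)]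
    have b2 : 1 + (z.2 : ℝ) ^ 2 ≤ 2 * N := by nlinarith [sq_nonneg (z.1 : ℝ), sq_nonneg (z.2 : ℝ)]
    have b3 : (1 + (z.1 : ℝ) ^ 2) * (1 + (z.2 : ℝ) ^ 2) ≤ 2 * N * (2 * N) :=
      mul_le_mul b1 b2 (by positivity) (by positivity)
    have b4 : 4 * (1 / (1 + (z.1 : ℝ) ^ 2) * (1 / (1 + (z.2 : ℝ) ^ 2))) =
        4 / ((1 + (z.1 : ℝ) ^ 2) * (1 + (z.2 : ℝ) ^ 2)) := by field_simp
    rw [b4, div_le_div_iff₀ (by positivity) (by positivity)]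
    linarith

lemma abs_chiNeg3_le (n : ℕ) : |chiNeg3 n| ≤ 1 := by
  unfold chiNeg3; split_ifs <;> simp

lemma summable_chiNeg3_normTwo :
    Summable fun z : ℤ × ℤ => chiNeg3 (normTwo z) / (normTwo z : ℝ) ^ 2 := by
  refine Summable.of_norm_bounded summable_normTwo fun z => ?_
  rw [norm_div, Real.norm_eq_abs, Real.norm_of_nonneg (by positivity : 0 ≤ (normTwo z : ℝ) ^ 2)]
  gcongr
  exact abs_chiNeg3_le _

/-- Modulo 3 the form `x² + 2y²` is `x² - y²`. -/
lemma chiNeg3_normTwo (z : ℤ × ℤ) : chiNeg3 (normTwo z) =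
    (if (3 : ℤ) ∣ z.2 then 1 else 0) - (if (3 : ℤ) ∣ z.1 then 1 else 0) := by
  obtain ⟨x, y⟩ := z
  have h := normTwo_cast (x, y)
  have h' : (normTwo (x, y) : ℤ) % 3 = ((x % 3) ^ 2 + 2 * (y % 3) ^ 2) % 3 := by
    rw [h]; simp [Int.add_emod, Int.mul_emod, pow_two]
  have hx : x % 3 = 0 ∨ x % 3 = 1 ∨ x % 3 = 2 := by omega
  have hy : y % 3 = 0 ∨ y % 3 = 1 ∨ y % 3 = 2 := by omega
  simp only [Int.dvd_iff_emod_eq_zero]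
  unfold chiNeg3
  rcases hx with hx | hx | hx <;> rcases hy with hy | hy | hy <;> rw [hx, hy] at h' ⊢ <;>
    norm_num at h' ⊢ <;> first
    | (have : normTwo (x, y) % 3 = 0 := by omega
       simp [this])
    | (have : normTwo (x, y) % 3 = 1 := by omega
       simp [this])
    | (have : normTwo (x, y) % 3 = 2 := by omega
       simp [this])

/-- The forms `k² + 18m²` and `9m² + 2k²` are the restrictions of `x² + 2y²` to the sublattices `3 ∣ y`
and `3 ∣ x`, and the difference of the indicators of these sublattices is `χ₋₃(x² + 2y²)`. The terms
at the origin are `1 / 0 = 0`. -/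
lemma lattice_sum_eq :
    (∑' p : ℤ × ℤ, (-(1 / ((9 * (p.2 : ℝ) ^ 2 + 2 * (p.1 : ℝ) ^ 2) ^ 2))
          + 1 / (((p.1 : ℝ) ^ 2 + 18 * (p.2 : ℝ) ^ 2) ^ 2))) =
      ∑' z : ℤ × ℤ, chiNeg3 (normTwo z) / (normTwo z : ℝ) ^ 2 := by
  let i : ℤ × ℤ → ℤ × ℤ := fun p => (p.1, 3 * p.2)
  let j : ℤ × ℤ → ℤ × ℤ := fun p => (3 * p.2, p.1)
  have hi : Function.Injective i := by
    rintro ⟨a, b⟩ ⟨c, d⟩ h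
    simp only [i, Prod.mk.injEq] at h ⊢
    omega
  have hj : Function.Injective j := by
    rintro ⟨a, b⟩ ⟨c, d⟩ h
    simp only [j, Prod.mk.injEq] at h ⊢
    omega
  let G : ℤ × ℤ → ℝ := fun z => 1 / (normTwo z : ℝ) ^ 2
  have hs : Summable G := summable_normTwo
  have hGi : Summable fun p => G (i p) := hs.comp_injective hi
  have hGj : Summable fun p => G (j p) := hs.comp_injective hj
  have eA : ∑' p, G (i p) = ∑' z, Set.indicator {z : ℤ × ℤ | (3 : ℤ) ∣ z.2} G z := by
    rw [← hi.tsum_eq (f := Set.indicator {z : ℤ × ℤ | (3 : ℤ) ∣ z.2} G)]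
    · refine tsum_congr fun p => ?_
      rw [Set.indicator_of_mem]
      exact dvd_mul_right (3 : ℤ) p.2
    · rintro ⟨x, y⟩ hz
      have hd : (x, y) ∈ {z : ℤ × ℤ | (3 : ℤ) ∣ z.2} := Set.mem_of_indicator_ne_zero hz
      obtain ⟨c, rfl⟩ : (3 : ℤ) ∣ y := hd
      exact ⟨(x, c), rfl⟩
  have eB : ∑' p, G (j p) = ∑' z, Set.indicator {z : ℤ × ℤ | (3 : ℤ) ∣ z.1} G z := by
    rw [← hj.tsum_eq (f := Set.indicator {z : ℤ × ℤ | (3 : ℤ) ∣ z.1} G)]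
    · refine tsum_congr fun p => ?_
      rw [Set.indicator_of_mem]
      exact dvd_mul_right (3 : ℤ) p.2
    · rintro ⟨x, y⟩ hz
      have hd : (x, y) ∈ {z : ℤ × ℤ | (3 : ℤ) ∣ z.1} := Set.mem_of_indicator_ne_zero hz
      obtain ⟨c, rfl⟩ : (3 : ℤ) ∣ x := hd
      exact ⟨(y, c), rfl⟩
  have e1 : (∑' z : ℤ × ℤ, chiNeg3 (normTwo z) / (normTwo z : ℝ) ^ 2) =
      ∑' p, G (i p) - ∑' p, G (j p) := by
    rw [eA, eB, ← (hs.indicator _).tsum_sub (hs.indicator _)]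
    refine tsum_congr fun z => ?_
    rw [chiNeg3_normTwo]
    simp only [Set.indicator_apply, Set.mem_ofPred_eq, G]
    split_ifs <;> ring
  rw [e1, ← hGi.tsum_sub hGj]
  refine tsum_congr fun p => ?_
  simp only [G, i, j, normTwo_cast_real]
  push_cast
  ring_nf

/-- Grouping the lattice points by their norm. -/
lemma lattice_sum_fiber :
    ∑' z : ℤ × ℤ, chiNeg3 (normTwo z) / (normTwo z : ℝ) ^ 2 =
      ∑' n : ℕ, ((repTwo n).ncard : ℝ) * (chiNeg3 n / (n : ℝ) ^ 2) := by
  rw [← (Equiv.sigmaFiberEquiv normTwo).tsum_eq, Summable.tsum_sigma]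
  · refine tsum_congr fun n => ?_
    have : ∀ c : {z // normTwo z = n}, chiNeg3 (normTwo (Equiv.sigmaFiberEquiv normTwo ⟨n, c⟩)) /
        (normTwo (Equiv.sigmaFiberEquiv normTwo ⟨n, c⟩) : ℝ) ^ 2 = chiNeg3 n / (n : ℝ) ^ 2 := by
      rintro ⟨z, rfl⟩; rfl
    rw [tsum_congr this, tsum_const, ← normTwo_fiber, nsmul_eq_mul]
    rfl
  · exact (Equiv.sigmaFiberEquiv normTwo).summable_iff.mpr summable_chiNeg3_normTwo

lemma chiNeg3_mul (a b : ℕ) : chiNeg3 (a * b) = chiNeg3 a * chiNeg3 b := by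
  have ha : a % 3 = 0 ∨ a % 3 = 1 ∨ a % 3 = 2 := by omega
  have hb : b % 3 = 0 ∨ b % 3 = 1 ∨ b % 3 = 2 := by omega
  unfold chiNeg3
  rw [Nat.mul_mod]
  rcases ha with ha | ha | ha <;> rcases hb with hb | hb | hb <;> norm_num [ha, hb]

lemma summable_chiNeg3 : Summable fun n : ℕ => chiNeg3 n / (n : ℝ) ^ 2 := by
  refine Summable.of_norm_bounded (Real.summable_one_div_nat_pow.mpr one_lt_two) fun n => ?_
  rw [norm_div, Real.norm_eq_abs, Real.norm_of_nonneg (by positivity : 0 ≤ (n : ℝ) ^ 2)]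
  gcongr
  exact abs_chiNeg3_le _

/-- The Dirichlet series of `χ₋₃(n) ∑_{d ∣ n} χ₋₈(d)` at `2` is the product `L(χ₂₄, 2) L(χ₋₃, 2)`. -/
lemma dirichlet_product :
    (∑' n : ℕ, chi24 n / (n : ℝ) ^ 2) * ∑' n : ℕ, chiNeg3 n / (n : ℝ) ^ 2 =
      ∑' n : ℕ, (∑ d ∈ n.divisors, (ZMod.χ₈' (d : ZMod 8) : ℝ)) * (chiNeg3 n / (n : ℝ) ^ 2) := by
  have hsum : Summable fun z : ℕ × ℕ =>
      chi24 z.1 / (z.1 : ℝ) ^ 2 * (chiNeg3 z.2 / (z.2 : ℝ) ^ 2) :=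
    summable_mul_of_summable_norm (f := fun n : ℕ => chi24 n / (n : ℝ) ^ 2)
      (g := fun n : ℕ => chiNeg3 n / (n : ℝ) ^ 2) hasSum_chi24.summable.norm summable_chiNeg3.norm
  rw [hasSum_chi24.summable.tsum_mul_tsum summable_chiNeg3 hsum]
  let μ : ℕ × ℕ → ℕ := fun z => z.1 * z.2
  rw [← (Equiv.sigmaFiberEquiv μ).tsum_eq, Summable.tsum_sigma]
  · refine tsum_congr fun n => ?_
    rcases eq_or_ne n 0 with rfl | hn
    · simp only [Nat.divisors_zero, Finset.sum_empty, zero_mul]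
      convert tsum_zero with c
      obtain ⟨⟨a, b⟩, h⟩ := c
      rcases Nat.mul_eq_zero.mp h with rfl | rfl <;> simp [Equiv.sigmaFiberEquiv]
    · have hset : {z | μ z = n} = (n.divisorsAntidiagonal : Set (ℕ × ℕ)) := by
        ext z; simp [μ, hn]
      have e : ∑' c : {z | μ z = n}, (fun z : ℕ × ℕ =>
          chi24 z.1 / (z.1 : ℝ) ^ 2 * (chiNeg3 z.2 / (z.2 : ℝ) ^ 2)) c =
          ∑ z ∈ n.divisorsAntidiagonal,
            chi24 z.1 / (z.1 : ℝ) ^ 2 * (chiNeg3 z.2 / (z.2 : ℝ) ^ 2) := by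
        rw [hset]; exact Finset.tsum_subtype' n.divisorsAntidiagonal (fun z : ℕ × ℕ =>
          chi24 z.1 / (z.1 : ℝ) ^ 2 * (chiNeg3 z.2 / (z.2 : ℝ) ^ 2))
      refine Eq.trans e ?_
      rw [Nat.sum_divisorsAntidiagonal (fun a b : ℕ =>
          chi24 a / (a : ℝ) ^ 2 * (chiNeg3 b / (b : ℝ) ^ 2)), Finset.sum_mul]
      refine Finset.sum_congr rfl fun d hd => ?_
      obtain ⟨k, rfl⟩ := Nat.dvd_of_mem_divisors hd
      have hd0 : d ≠ 0 := left_ne_zero_of_mul hn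
      rw [Nat.mul_div_cancel_left _ (Nat.pos_of_ne_zero hd0), chiNeg3_mul, chi24]
      push_cast
      rw [mul_pow]
      field_simp
  · exact (Equiv.sigmaFiberEquiv μ).summable_iff.mpr hsum

theorem sum_diff_at_two :
    (∑' p : {q : ℤ × ℤ // q ≠ 0},
        (-(1 / ((9 * (p.1.2 : ℝ) ^ 2 + 2 * (p.1.1 : ℝ) ^ 2) ^ 2))
          + 1 / (((p.1.1 : ℝ) ^ 2 + 18 * (p.1.2 : ℝ) ^ 2) ^ 2))) =
      (π ^ 2 / (2 * Real.sqrt 6)) * ∑' n : ℕ, chiNeg3 n / (n : ℝ) ^ 2 := by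
  -- The term at the origin is `-(1 / 0) + 1 / 0 = 0`, so the sum may be taken over all of `ℤ × ℤ`.
  have h0 := tsum_subtype_eq_of_support_subset (s := {q : ℤ × ℤ | q ≠ 0})
    (f := fun p : ℤ × ℤ => (-(1 / ((9 * (p.2 : ℝ) ^ 2 + 2 * (p.1 : ℝ) ^ 2) ^ 2))
          + 1 / (((p.1 : ℝ) ^ 2 + 18 * (p.2 : ℝ) ^ 2) ^ 2))) (by
      rintro z hz rfl
      simp at hz)
  refine h0.trans ?_
  have h1 : (∑' n : ℕ, ((repTwo n).ncard : ℝ) * (chiNeg3 n / (n : ℝ) ^ 2)) =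
      ∑' n : ℕ, 2 * ((∑ d ∈ n.divisors, (ZMod.χ₈' (d : ZMod 8) : ℝ)) *
        (chiNeg3 n / (n : ℝ) ^ 2)) := by
    refine tsum_congr fun n => ?_
    rcases eq_or_ne n 0 with rfl | hn
    · simp
    · have := congrArg (Int.cast : ℤ → ℝ) (ncard_repTwo hn)
      push_cast at this
      rw [this]; ring
  rw [lattice_sum_eq, lattice_sum_fiber, h1, tsum_mul_left, ← dirichlet_product,
    hasSum_chi24.tsum_eq]
  have h6 : √6 ≠ 0 := by positivity
  field_simp
  norm_num
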